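/- Let 0 < α ≤ 1 and 0 < β < 1. Then there exists a constant C > 0 (depending only on α and β) such that ∫₀^∞ (t + s)^{−1/2−α/2} (t + s/ε²)^{−1/2−β/2} ds ≤ C t^{−α/2−β/2} ε^{1+β} for all t > 0 and all 0 < ε ≤ 1. -/

import Mathlib

open MeasureTheory

/-!
Write `a = (1 + α) / 2` and `b = (1 + β) / 2`. Since `t + s / ε² ≥ s / ε²`, the second factor is at
most `ε ^ (1 + β) * s ^ (-b)`. For `s ≤ t` the first factor is at most `t ^ (-a)`, and for `s > t`
it is at most `s ^ (-a)`. The resulting majorant is integrable near `0` because `b < 1` and at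
infinity because `a + b > 1`, and both pieces integrate to a multiple of
`t ^ (1 - a - b) = t ^ (-α / 2 - β / 2)`.
-/

/-- The piecewise majorant of the integrand, up to the factor `ε ^ (1 + β)`. -/
noncomputable def majorant (α β t s : ℝ) : ℝ :=
  if s ≤ t then t ^ (-(1 / 2) - α / 2 : ℝ) * s ^ (-(1 / 2) - β / 2 : ℝ)
  else s ^ (-1 - α / 2 - β / 2 : ℝ)

lemma integrand_le_majorant {α β t ε s : ℝ} (hα0 : 0 < α) (hβ0 : 0 < β) (ht : 0 < t)
    (hε : 0 < ε) (hs : 0 < s) :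
    (t + s) ^ (-(1 / 2) - α / 2 : ℝ) * (t + s / ε ^ 2) ^ (-(1 / 2) - β / 2 : ℝ)
      ≤ ε ^ (1 + β) * majorant α β t s := by
  have h2 : (t + s / ε ^ 2) ^ (-(1 / 2) - β / 2 : ℝ)
      ≤ ε ^ (1 + β) * s ^ (-(1 / 2) - β / 2 : ℝ) := by
    have e : (s / ε ^ 2) ^ (-(1 / 2) - β / 2 : ℝ)
        = ε ^ (1 + β) * s ^ (-(1 / 2) - β / 2 : ℝ) := by
      rw [Real.div_rpow hs.le (by positivity), ← Real.rpow_natCast, ← Real.rpow_mul hε.le,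
        div_eq_mul_inv, ← Real.rpow_neg hε.le, mul_comm]
      congr 2
      push_cast
      ring
    rw [← e]
    exact Real.rpow_le_rpow_of_nonpos (by positivity) (by linarith) (by linarith)
  have key : (t + s) ^ (-(1 / 2) - α / 2 : ℝ) * s ^ (-(1 / 2) - β / 2 : ℝ)
      ≤ majorant α β t s := by
    unfold majorant
    split_ifs with h
    · gcongr ?_ * _
      exact Real.rpow_le_rpow_of_nonpos ht (by linarith) (by linarith)
    · have e : s ^ (-1 - α / 2 - β / 2 : ℝ)
          = s ^ (-(1 / 2) - α / 2 : ℝ) * s ^ (-(1 / 2) - β / 2 : ℝ) := by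
        rw [← Real.rpow_add hs]
        congr 1
        ring
      rw [e]
      gcongr ?_ * _
      exact Real.rpow_le_rpow_of_nonpos hs (by linarith) (by linarith)
  calc _ ≤ (t + s) ^ (-(1 / 2) - α / 2 : ℝ) * (ε ^ (1 + β) * s ^ (-(1 / 2) - β / 2 : ℝ)) := by
        gcongr
    _ = ε ^ (1 + β) * ((t + s) ^ (-(1 / 2) - α / 2 : ℝ) * s ^ (-(1 / 2) - β / 2 : ℝ)) := by ring
    _ ≤ _ := by gcongr

lemma integral_majorant {α β t : ℝ} (hα0 : 0 < α) (hβ0 : 0 < β) (hβ1 : β < 1) (ht : 0 < t) :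
    IntegrableOn (majorant α β t) (Set.Ioi 0) ∧
      ∫ s in Set.Ioi (0 : ℝ), majorant α β t s
        = (2 / (1 - β) + 2 / (α + β)) * t ^ (-(α / 2) - β / 2 : ℝ) := by
  have e1 : Set.EqOn (majorant α β t)
      (fun s ↦ t ^ (-(1 / 2) - α / 2 : ℝ) * s ^ (-(1 / 2) - β / 2 : ℝ)) (Set.Ioc 0 t) :=
    fun s hs ↦ if_pos hs.2
  have e2 : Set.EqOn (majorant α β t) (fun s ↦ s ^ (-1 - α / 2 - β / 2 : ℝ)) (Set.Ioi t) :=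
    fun s hs ↦ if_neg (not_le.mpr hs)
  have i1 : IntegrableOn (majorant α β t) (Set.Ioc 0 t) := by
    rw [integrableOn_congr_fun e1 measurableSet_Ioc]
    refine Integrable.const_mul ?_ _
    exact (intervalIntegrable_iff_integrableOn_Ioc_of_le ht.le).1
      (intervalIntegral.intervalIntegrable_rpow' (by linarith))
  have i2 : IntegrableOn (majorant α β t) (Set.Ioi t) := by
    rw [integrableOn_congr_fun e2 measurableSet_Ioi]
    exact integrableOn_Ioi_rpow_of_lt (by linarith) ht
  rw [← Set.Ioc_union_Ioi_eq_Ioi ht.le]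
  refine ⟨i1.union i2, ?_⟩
  rw [setIntegral_union (Set.Ioc_disjoint_Ioi le_rfl) measurableSet_Ioi i1 i2,
    setIntegral_congr_fun measurableSet_Ioc e1, setIntegral_congr_fun measurableSet_Ioi e2,
    integral_Ioi_rpow_of_lt (by linarith) ht, integral_const_mul,
    ← intervalIntegral.integral_of_le ht.le, integral_rpow (Or.inl (by linarith)),
    Real.zero_rpow (by linarith), sub_zero, mul_div_assoc', ← Real.rpow_add ht]
  have x1 : (-(1 / 2) - α / 2 + (-(1 / 2) - β / 2 + 1) : ℝ) = -(α / 2) - β / 2 := by ring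
  have x2 : (-1 - α / 2 - β / 2 + 1 : ℝ) = -(α / 2) - β / 2 := by ring
  have x3 : (-(1 / 2) - β / 2 + 1 : ℝ) = (1 - β) / 2 := by ring
  have x4 : (-(α / 2) - β / 2 : ℝ) = -((α + β) / 2) := by ring
  rw [x1, x2, x3, x4]
  have : 1 - β ≠ 0 := by linarith
  have : α + β ≠ 0 := by linarith
  field_simp

theorem integral_bound_two (α β : ℝ) (hα0 : 0 < α) (hα1 : α ≤ 1) (hβ0 : 0 < β) (hβ1 : β < 1) :
    ∃ C : ℝ, 0 < C ∧ ∀ t ε : ℝ, 0 < t → 0 < ε → ε ≤ 1 →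
      (∫ s in Set.Ioi (0 : ℝ),
          (t + s) ^ (-(1 / 2) - α / 2 : ℝ) * (t + s / ε ^ 2) ^ (-(1 / 2) - β / 2 : ℝ))
        ≤ C * t ^ (-(α / 2) - β / 2 : ℝ) * ε ^ (1 + β) := by
  have hβ : 0 < 1 - β := by linarith
  refine ⟨2 / (1 - β) + 2 / (α + β), by positivity, fun t ε ht hε _ ↦ ?_⟩
  obtain ⟨hint, hval⟩ := integral_majorant hα0 hβ0 hβ1 ht
  rw [← hval, mul_comm _ (ε ^ (1 + β)), ← integral_const_mul]
  refine integral_mono_of_nonneg ?_ (hint.const_mul _) ?_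
  · filter_upwards [ae_restrict_mem measurableSet_Ioi] with s hs
    have hs : 0 < s := hs
    simp only [Pi.zero_apply]
    positivity
  · filter_upwards [ae_restrict_mem measurableSet_Ioi] with s hs
    exact integrand_le_majorant hα0 hβ0 ht hε hs
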